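/- arXiv:2504.00190 — 2 statements merged into one kernel-verified Lean document; each statement's English description precedes it below -/
import Mathlib

section
/- Let x₀ ∈ ℝ², r > 0, and let μ be a finite Borel measure on ℝ² that is supported in the closed ball of radius r centered at x₀ (i.e., μ(ℝ² \ closedBall(x₀, r)) = 0) and satisfies μ({x₀}) = 0. Then ∫ log( 3r / |y − x₀| ) dμ(y) ≤ (log 6) · Σ_{k=0}^{∞} μ( closedBall(x₀, 2^{-k} r) ), where both sides may be infinite. -/
/-!
The sum on the right is the integral of the function counting the dyadic balls
`closedBall x₀ (2⁻ᵏ r)` that contain `y`. If `2ⁿ ≤ r / |y - x₀| < 2ⁿ⁺¹`, then `y` lies in the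
balls with `k = 0, …, n`, so the count is at least `n + 1`, while
`log (3r / |y - x₀|) ≤ log (3 · 2ⁿ⁺¹) = log 6 + n log 2 ≤ (n + 1) log 6`. This gives the bound
pointwise on the closed ball minus its center, hence almost everywhere.
-/

open MeasureTheory Metric ENNReal

/-- The estimate for the integrand at a single point `y ≠ x₀` of the ball, the sum on the right
counting the dyadic balls that contain `y`. -/
lemma ofReal_log_le_mul_tsum_indicator
    {x₀ y : EuclideanSpace ℝ (Fin 2)} {r : ℝ} (hy : y ∈ closedBall x₀ r) (hne : y ≠ x₀) :
    ENNReal.ofReal (Real.log (3 * r / dist y x₀)) ≤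
      ENNReal.ofReal (Real.log 6) *
        ∑' k : ℕ, (closedBall x₀ ((2 : ℝ) ^ (-(k : ℤ)) * r)).indicator 1 y := by
  have hd : 0 < dist y x₀ := dist_pos.2 hne
  have hdr : dist y x₀ ≤ r := hy
  have hr : 0 < r := hd.trans_le hdr
  obtain ⟨n, hn₁, hn₂⟩ :=
    exists_nat_pow_near ((one_le_div hd).2 hdr) (one_lt_two : (1 : ℝ) < 2)
  have hmem : ∀ k ∈ Finset.range (n + 1),
      (closedBall x₀ ((2 : ℝ) ^ (-(k : ℤ)) * r)).indicator (1 : EuclideanSpace ℝ (Fin 2) → ℝ≥0∞) y = 1 := by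
    intro k hk
    refine Set.indicator_of_mem ?_ _
    have hkn : (2 : ℝ) ^ k ≤ r / dist y x₀ :=
      (pow_le_pow_right₀ one_le_two (Nat.lt_succ_iff.1 (Finset.mem_range.1 hk))).trans hn₁
    rw [le_div_iff₀ hd] at hkn
    rw [mem_closedBall, zpow_neg, zpow_natCast, inv_mul_eq_div, le_div_iff₀ (by positivity)]
    linarith
  have hcount : ((n + 1 : ℕ) : ℝ≥0∞) ≤
      ∑' k : ℕ, (closedBall x₀ ((2 : ℝ) ^ (-(k : ℤ)) * r)).indicator 1 y := by
    refine le_trans (le_of_eq ?_) (ENNReal.sum_le_tsum (Finset.range (n + 1)))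
    rw [Finset.sum_congr rfl hmem]
    simp
  have hlog : Real.log (3 * r / dist y x₀) ≤ Real.log 6 * (n + 1 : ℕ) := by
    have hle : 3 * r / dist y x₀ ≤ 6 ^ (n + 1) := calc
      3 * r / dist y x₀ = 3 * (r / dist y x₀) := by ring
      _ ≤ 3 * 2 ^ (n + 1) := by linarith
      _ ≤ 3 ^ (n + 1) * 2 ^ (n + 1) := by
        gcongr
        exact le_self_pow₀ (by norm_num) (Nat.succ_ne_zero n)
      _ = 6 ^ (n + 1) := by rw [← mul_pow]; norm_num
    calc Real.log (3 * r / dist y x₀) ≤ Real.log (6 ^ (n + 1)) :=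
          Real.log_le_log (by positivity) hle
      _ = Real.log 6 * (n + 1 : ℕ) := by rw [Real.log_pow, mul_comm]
  calc ENNReal.ofReal (Real.log (3 * r / dist y x₀))
      ≤ ENNReal.ofReal (Real.log 6 * (n + 1 : ℕ)) := ENNReal.ofReal_le_ofReal hlog
    _ = ENNReal.ofReal (Real.log 6) * (n + 1 : ℕ) := by
      rw [ENNReal.ofReal_mul (Real.log_nonneg (by norm_num)), ENNReal.ofReal_natCast]
    _ ≤ _ := by gcongr

/-- Let `x₀ ∈ ℝ²`, `r > 0`, and let `μ` be a finite Borel measure on `ℝ²`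
supported in the closed ball of radius `r` about `x₀` with `μ({x₀}) = 0`. Then
`∫ log(3r/|y − x₀|) dμ(y) ≤ (log 6) · Σ_{k=0}^{∞} μ(closedBall(x₀, 2^{-k} r))`,
where both sides may be infinite. -/
theorem log_potential_dyadic_bound
    (x₀ : EuclideanSpace ℝ (Fin 2)) (r : ℝ) (hr : 0 < r)
    (μ : Measure (EuclideanSpace ℝ (Fin 2))) [IsFiniteMeasure μ]
    (hsupp : μ (closedBall x₀ r)ᶜ = 0) (hpt : μ {x₀} = 0) :
    ∫⁻ y, ENNReal.ofReal (Real.log (3 * r / dist y x₀)) ∂μ ≤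
      ENNReal.ofReal (Real.log 6) *
        ∑' k : ℕ, μ (closedBall x₀ ((2 : ℝ) ^ (-(k : ℤ)) * r)) := by
  have hball : ∀ᵐ y ∂μ, y ∈ closedBall x₀ r := hsupp
  have hcenter : ∀ᵐ y ∂μ, y ≠ x₀ := by
    rw [ae_iff]
    simpa using hpt
  calc ∫⁻ y, ENNReal.ofReal (Real.log (3 * r / dist y x₀)) ∂μ
      ≤ ∫⁻ y, ENNReal.ofReal (Real.log 6) *
          ∑' k : ℕ, (closedBall x₀ ((2 : ℝ) ^ (-(k : ℤ)) * r)).indicator 1 y ∂μ := by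
        refine lintegral_mono_ae ?_
        filter_upwards [hball, hcenter] with y hy hne
        exact ofReal_log_le_mul_tsum_indicator hy hne
    _ = _ := by
        rw [lintegral_const_mul' _ _ ENNReal.ofReal_ne_top, lintegral_tsum fun k =>
          (measurable_one.indicator measurableSet_closedBall).aemeasurable]
        simp_rw [lintegral_indicator_one measurableSet_closedBall]
end

section
/- Let Ω ⊂ ℝ² be a bounded open set, let α ∈ (0, 1], K ≥ 0, C₁ ≥ 0, and let u : ℝ² → ℝ. Assume: (a) for every x₀ in the boundary ∂Ω and every t > 0, and all x, y ∈ Ω ∩ B_t(x₀), one has |u(x) − u(y)| ≤ K t^α; and (b) for every x ∈ Ω and r > 0 with B_{2r}(x) ⊆ Ω, and all y, z ∈ B_r(x), one has |u(y) − u(z)| ≤ C₁ r^{−α} · ( sup_{y', z' ∈ B_{2r}(x)} |u(y') − u(z')| ) · |y − z|^α. Then for all x, y ∈ Ω, |u(x) − u(y)| ≤ 4^α (1 + C₁) K |x − y|^α; that is, u is α-Hölder continuous on Ω with seminorm at most 4^α (1 + C₁) K. -/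
open Metric Set

/-! The estimate follows by comparing `|x - y|` with the distance `d` from `x` to a nearest
boundary point `x₀`. If `d ≤ 2|x - y|`, then `x` and `y` both lie in the ball of radius `4|x - y|`
about `x₀`, and the boundary estimate gives the factor `4 ^ α * K`. Otherwise the interior estimate
is used at radius `d / 2`; the ball of radius `d` about `x` lies in the ball of radius `2d`
about `x₀`, so the boundary estimate bounds the supremum by `K * (2d) ^ α`, and
`(d / 2) ^ (-α) * (2d) ^ α = 4 ^ α`. -/

/-- Existence of a nearest boundary point. It is found as a nearest point of the closed set `Ωᶜ`,
so that the ball of radius `dist x x₀` lies in `Ω` by minimality; `x₀` is in the closure of that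
ball, hence on the frontier. -/
lemma exists_frontier_ball_subset {Ω : Set (EuclideanSpace ℝ (Fin 2))}
    (hΩb : Bornology.IsBounded Ω) (hΩo : IsOpen Ω) {x : EuclideanSpace ℝ (Fin 2)} (hx : x ∈ Ω) :
    ∃ x₀ ∈ frontier Ω, 0 < dist x x₀ ∧ ball x (dist x x₀) ⊆ Ω := by
  have hne : (Ωᶜ).Nonempty := by
    rw [nonempty_compl]
    rintro rfl
    exact NormedSpace.unbounded_univ ℝ (EuclideanSpace ℝ (Fin 2)) hΩb
  obtain ⟨x₀, hx₀, h⟩ := hΩo.isClosed_compl.exists_infDist_eq_dist hne x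
  have hpos : 0 < dist x x₀ := dist_pos.2 (by rintro rfl; exact hx₀ hx)
  have hball : ball x (dist x x₀) ⊆ Ω := by
    rw [← h]
    exact ball_infDist_compl_subset
  refine ⟨x₀, ?_, hpos, hball⟩
  rw [hΩo.frontier_eq]
  refine ⟨closure_mono hball ?_, hx₀⟩
  rw [closure_ball x hpos.ne', mem_closedBall, dist_comm]

/-- Gluing a boundary oscillation estimate with interior Hölder estimates:
if `Ω ⊂ ℝ²` is bounded and open, `α ∈ (0,1]`, and `u` satisfies
(a) `|u(x) − u(y)| ≤ K t^α` for all `x, y ∈ Ω ∩ B_t(x₀)` with `x₀ ∈ ∂Ω`, `t > 0`, and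
(b) `|u(y) − u(z)| ≤ C₁ r^{−α} (sup_{y',z' ∈ B_{2r}(x)} |u(y') − u(z')|) |y − z|^α`
for all `y, z ∈ B_r(x)` whenever `B_{2r}(x) ⊆ Ω`,
then `|u(x) − u(y)| ≤ 4^α (1 + C₁) K |x − y|^α` for all `x, y ∈ Ω`. -/
theorem global_holder_from_boundary_and_interior
    (Ω : Set (EuclideanSpace ℝ (Fin 2))) (hΩb : Bornology.IsBounded Ω)
    (hΩo : IsOpen Ω) (α : ℝ) (hα0 : 0 < α) (hα1 : α ≤ 1)
    (K C₁ : ℝ) (hK : 0 ≤ K) (hC₁ : 0 ≤ C₁)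
    (u : EuclideanSpace ℝ (Fin 2) → ℝ)
    (hbdry : ∀ x₀ ∈ frontier Ω, ∀ t > (0 : ℝ),
      ∀ x ∈ Ω ∩ ball x₀ t, ∀ y ∈ Ω ∩ ball x₀ t,
        |u x - u y| ≤ K * t ^ α)
    (hint : ∀ x ∈ Ω, ∀ r > (0 : ℝ), ball x (2 * r) ⊆ Ω →
      ∀ y ∈ ball x r, ∀ z ∈ ball x r,
        |u y - u z| ≤ C₁ * r ^ (-α) *
          sSup {d : ℝ | ∃ y' ∈ ball x (2 * r), ∃ z' ∈ ball x (2 * r),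
            d = |u y' - u z'|} * dist y z ^ α) :
    ∀ x ∈ Ω, ∀ y ∈ Ω,
      |u x - u y| ≤ (4 : ℝ) ^ α * (1 + C₁) * K * dist x y ^ α := by
  intro x hx y hy
  rcases eq_or_ne x y with rfl | hxy
  · simp [Real.zero_rpow hα0.ne']
  obtain ⟨x₀, hx₀, hd, hball⟩ := exists_frontier_ball_subset hΩb hΩo hx
  set d := dist x x₀ with hd_def
  have hρ : 0 < dist x y := dist_pos.2 hxy
  have hρα : 0 ≤ dist x y ^ α := Real.rpow_nonneg hρ.le α
  have h4 : 0 ≤ (4 : ℝ) ^ α := Real.rpow_nonneg (by norm_num) α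
  rcases le_or_gt d (2 * dist x y) with hle | hgt
  · -- Near the boundary: `x` and `y` both lie in the ball of radius `4|x - y|` about `x₀`.
    have hyx₀ : dist y x₀ ≤ dist x y + d := by
      simpa [dist_comm y x] using dist_triangle y x x₀
    have h := hbdry x₀ hx₀ (4 * dist x y) (by positivity)
      x ⟨hx, mem_ball.2 (by linarith)⟩ y ⟨hy, mem_ball.2 (by linarith)⟩
    rw [Real.mul_rpow (by norm_num) hρ.le] at h
    have : 0 ≤ (4 : ℝ) ^ α * C₁ * K * dist x y ^ α := by positivity
    linarith
  · -- In the interior: the Hölder estimate at radius `d / 2`, whose double ball lies in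
    -- the ball of radius `2d` about `x₀`, where the oscillation is controlled.
    have h2 : 2 * (d / 2) = d := by ring
    have h := hint x hx (d / 2) (by positivity) (by rwa [h2])
      x (mem_ball_self (by positivity))
      y (mem_ball.2 (by rw [dist_comm]; linarith))
    rw [h2] at h
    have hmem : ∀ w ∈ ball x d, w ∈ Ω ∩ ball x₀ (2 * d) := fun w hw =>
      ⟨hball hw, mem_ball.2 (by
        have := dist_triangle w x x₀
        have := mem_ball.1 hw
        linarith)⟩
    have hsup : sSup {s : ℝ | ∃ y' ∈ ball x d, ∃ z' ∈ ball x d, s = |u y' - u z'|}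
        ≤ K * (2 * d) ^ α := by
      refine csSup_le ⟨_, x, mem_ball_self hd, x, mem_ball_self hd, rfl⟩ ?_
      rintro _ ⟨y', hy', z', hz', rfl⟩
      exact hbdry x₀ hx₀ (2 * d) (by positivity) y' (hmem y' hy') z' (hmem z' hz')
    have hscale : (d / 2) ^ (-α) * (2 * d) ^ α = (4 : ℝ) ^ α := by
      have hr : 0 < d / 2 := by positivity
      rw [show 2 * d = 4 * (d / 2) by ring, Real.mul_rpow (by norm_num) hr.le,
        mul_left_comm, ← Real.rpow_add hr]
      simp
    have hr : 0 ≤ (d / 2) ^ (-α) := Real.rpow_nonneg (by positivity) _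
    calc |u x - u y| ≤ C₁ * (d / 2) ^ (-α) * (K * (2 * d) ^ α) * dist x y ^ α :=
          h.trans (by gcongr)
      _ = C₁ * K * ((d / 2) ^ (-α) * (2 * d) ^ α) * dist x y ^ α := by ring
      _ = 4 ^ α * C₁ * K * dist x y ^ α := by rw [hscale]; ring
      _ ≤ 4 ^ α * (1 + C₁) * K * dist x y ^ α := by gcongr; linarith
end
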